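/- arXiv:0804.2911 — 6 statements merged into one kernel-verified Lean document; each statement's English description precedes it below -/
import Mathlib

section
/- Let U ⊆ ℝⁿ be open and connected, let Γ be smooth Christoffel symbols on U, and let h be a smooth metric on U (a smooth field of symmetric invertible matrices). Suppose the connection determined by Γ is locally metric compatible with h up to conformal factor, i.e. for every point x ∈ U there is an open neighbourhood V ⊆ U of x and a smooth positive function μ : V → ℝ such that the field μ⁻¹h is parallel on V: ∂ₖ(μ⁻¹h)ᵢⱼ − Σₗ Γˡₖᵢ (μ⁻¹h)ₗⱼ − Σₗ Γˡₖⱼ (μ⁻¹h)ᵢₗ = 0 on V for all i,j,k. Then there exists a smooth closed 1-form Ψ on U (i.e. smooth Ψ : U → ℝⁿ with ∂ᵢΨⱼ = ∂ⱼΨᵢ) such that ∇h = h ⊗ Ψ on U, i.e. ∂ₖhᵢⱼ − Σₗ Γˡₖᵢ hₗⱼ − Σₗ Γˡₖⱼ hᵢₗ = hᵢⱼ Ψₖ for all i,j,k. -/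
/-- The `k`-th partial derivative of a scalar function on `ℝⁿ`. -/
noncomputable def pd {n : ℕ} (f : (Fin n → ℝ) → ℝ) (k : Fin n) (x : Fin n → ℝ) : ℝ :=
  fderiv ℝ f x (Pi.single k 1)

/-- The covariant derivative `(∇ₖ g)ᵢⱼ = ∂ₖ gᵢⱼ − Σₗ Γˡₖᵢ gₗⱼ − Σₗ Γˡₖⱼ gᵢₗ` of a
matrix-valued field `g` with respect to the Christoffel symbols `Γ` (written `Γ x l k i`). -/
noncomputable def covDeriv {n : ℕ} (Γ : (Fin n → ℝ) → Fin n → Fin n → Fin n → ℝ)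
    (g : (Fin n → ℝ) → Matrix (Fin n) (Fin n) ℝ) (k i j : Fin n) (x : Fin n → ℝ) : ℝ :=
  pd (fun y => g y i j) k x - (∑ l, Γ x l k i * g x l j) - ∑ l, Γ x l k j * g x i l

/-- A smooth metric on `U`: a smooth field of symmetric invertible matrices. -/
def SmoothMetricOn {n : ℕ} (h : (Fin n → ℝ) → Matrix (Fin n) (Fin n) ℝ)
    (U : Set (Fin n → ℝ)) : Prop :=
  (∀ i j, ContDiffOn ℝ (⊤ : ℕ∞) (fun x => h x i j) U) ∧
  ∀ x ∈ U, (h x).IsSymm ∧ IsUnit (h x)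

/-- Smooth Christoffel symbols on `U`. -/
def SmoothChristoffelOn {n : ℕ} (Γ : (Fin n → ℝ) → Fin n → Fin n → Fin n → ℝ)
    (U : Set (Fin n → ℝ)) : Prop :=
  ∀ l k i, ContDiffOn ℝ (⊤ : ℕ∞) (fun x => Γ x l k i) U


theorem cov_aux {n : ℕ} (Γ : (Fin n → ℝ) → Fin n → Fin n → Fin n → ℝ)
    (h : (Fin n → ℝ) → Matrix (Fin n) (Fin n) ℝ) (μ : (Fin n → ℝ) → ℝ) (y : Fin n → ℝ)
    (k i j : Fin n)
    (hd : DifferentiableAt ℝ (fun x => h x i j) y) (hμ : DifferentiableAt ℝ μ y) (hpos : 0 < μ y)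
    (H : covDeriv Γ (fun z => (μ z)⁻¹ • h z) k i j y = 0) :
    covDeriv Γ h k i j y = h y i j * pd (fun z => Real.log (μ z)) k y := by
  have hne := hpos.ne'
  have e1 : pd (fun z => Real.log (μ z)) k y = (μ y)⁻¹ * pd μ k y := by
    unfold pd
    rw [(hμ.hasFDerivAt.log hne).fderiv]
    simp
  have hinv : HasFDerivAt (fun z => (μ z)⁻¹) (-((μ y) ^ 2)⁻¹ • fderiv ℝ μ y) y :=
    (hasDerivAt_inv hne).comp_hasFDerivAt y hμ.hasFDerivAt
  have e2 : pd (fun z => ((μ z)⁻¹ • h z) i j) k y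
      = (μ y)⁻¹ * pd (fun z => h z i j) k y - h y i j * ((μ y ^ 2)⁻¹ * pd μ k y) := by
    unfold pd
    have := (hinv.mul hd.hasFDerivAt).fderiv
    have e : (fun z => ((μ z)⁻¹ • h z) i j) = (fun z => (μ z)⁻¹) * (fun z => h z i j) := by
      funext z; simp
    rw [e, this]
    simp
    ring
  unfold covDeriv at H ⊢
  rw [e2] at H
  rw [e1]
  simp only [Matrix.smul_apply, smul_eq_mul, mul_left_comm _ (μ y)⁻¹, ← Finset.mul_sum] at H
  generalize pd (fun y => h y i j) k y = A at *
  generalize ∑ l, Γ y l k i * h y l j = B at *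
  generalize ∑ l, Γ y l k j * h y i l = C at *
  field_simp at H
  field_simp
  linarith

/-- **Theorem 1**: if the connection given by `Γ` is locally metric compatible with the
metric `h` up to conformal factor on the open connected set `U`, then there is a smooth
closed 1-form `Ψ` on `U` with `∇h = h ⊗ Ψ`. -/
theorem exists_closed_oneForm_of_locallyMetric {n : ℕ} (U : Set (Fin n → ℝ))
    (hU : IsOpen U) (hUconn : IsConnected U)
    (Γ : (Fin n → ℝ) → Fin n → Fin n → Fin n → ℝ) (hΓ : SmoothChristoffelOn Γ U)
    (h : (Fin n → ℝ) → Matrix (Fin n) (Fin n) ℝ) (hh : SmoothMetricOn h U)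
    (hloc : ∀ x ∈ U, ∃ V : Set (Fin n → ℝ), IsOpen V ∧ x ∈ V ∧ V ⊆ U ∧
      ∃ μ : (Fin n → ℝ) → ℝ, ContDiffOn ℝ (⊤ : ℕ∞) μ V ∧ (∀ y ∈ V, 0 < μ y) ∧
        ∀ y ∈ V, ∀ i j k, covDeriv Γ (fun z => (μ z)⁻¹ • h z) k i j y = 0) :
    ∃ Ψ : (Fin n → ℝ) → Fin n → ℝ,
      (∀ k, ContDiffOn ℝ (⊤ : ℕ∞) (fun x => Ψ x k) U) ∧
      (∀ x ∈ U, ∀ i j, pd (fun y => Ψ y j) i x = pd (fun y => Ψ y i) j x) ∧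
      (∀ x ∈ U, ∀ i j k, covDeriv Γ h k i j x = h x i j * Ψ x k) := by
  have key : ∀ x ∈ U, ∃ V : Set (Fin n → ℝ), IsOpen V ∧ x ∈ V ∧ V ⊆ U ∧
      ∃ f : (Fin n → ℝ) → ℝ, ContDiffOn ℝ (⊤ : ℕ∞) f V ∧
        ∀ y ∈ V, ∀ i j k, covDeriv Γ h k i j y = h y i j * pd f k y := by
    intro x hx
    obtain ⟨V, hV, hxV, hVU, μ, hμ, hpos, H⟩ := hloc x hx
    refine ⟨V, hV, hxV, hVU, fun z => Real.log (μ z), hμ.log (fun y hy => (hpos y hy).ne'), ?_⟩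
    intro y hy i j k
    refine cov_aux Γ h μ y k i j ?_ ?_ (hpos y hy) (H y hy i j k)
    · exact ((hh.1 i j).contDiffAt (hU.mem_nhds (hVU hy))).differentiableAt (by simp)
    · exact (hμ.contDiffAt (hV.mem_nhds hy)).differentiableAt (by simp)
  have nz : ∀ y ∈ U, ∀ _ : Fin n, ∃ i j, h y i j ≠ 0 := by
    intro y hy k
    by_contra! hc
    have h0 : h y = 0 := by ext i j; exact hc i j
    have hu := (hh.2 y hy).2
    haveI : Nonempty (Fin n) := ⟨k⟩
    rw [h0] at hu
    exact not_isUnit_zero hu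
  have ex : ∀ y, ∀ k, ∃ c : ℝ, y ∈ U → ∀ i j, covDeriv Γ h k i j y = h y i j * c := by
    intro y k
    by_cases hy : y ∈ U
    · obtain ⟨V, -, hyV, -, f, -, H⟩ := key y hy
      exact ⟨pd f k y, fun _ i j => H y hyV i j k⟩
    · exact ⟨0, fun h => absurd h hy⟩
  choose Ψ hΨ using ex
  have loc : ∀ x ∈ U, ∃ V : Set (Fin n → ℝ), IsOpen V ∧ x ∈ V ∧
      ∃ f : (Fin n → ℝ) → ℝ, ContDiffOn ℝ (⊤ : ℕ∞) f V ∧ ∀ y ∈ V, ∀ k, Ψ y k = pd f k y := by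
    intro x hx
    obtain ⟨V, hV, hxV, hVU, f, hf, H⟩ := key x hx
    refine ⟨V, hV, hxV, f, hf, fun y hy k => ?_⟩
    obtain ⟨i, j, hij⟩ := nz y (hVU hy) k
    exact mul_left_cancel₀ hij ((hΨ y k (hVU hy) i j).symm.trans (H y hy i j k))
  refine ⟨Ψ, ?_, ?_, fun x hx i j k => hΨ x k hx i j⟩
  · intro k x hx
    obtain ⟨V, hV, hxV, f, hf, H⟩ := loc x hx
    have h1 : ContDiffOn ℝ (⊤ : ℕ∞) (fderiv ℝ f) V := hf.fderiv_of_isOpen hV (by simp)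
    have h2 : ContDiffOn ℝ (⊤ : ℕ∞) (fun y => Ψ y k) V :=
      (h1.clm_apply contDiffOn_const).congr (fun y hy => H y hy k)
    exact (h2.contDiffAt (hV.mem_nhds hxV)).contDiffWithinAt
  · intro x hx i j
    obtain ⟨V, hV, hxV, f, hf, H⟩ := loc x hx
    have h1 : ContDiffOn ℝ (⊤ : ℕ∞) (fderiv ℝ f) V := hf.fderiv_of_isOpen hV (by simp)
    have hd : DifferentiableAt ℝ (fderiv ℝ f) x :=
      (h1.contDiffAt (hV.mem_nhds hxV)).differentiableAt (by simp)
    have hs : IsSymmSndFDerivAt ℝ f x :=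
      (hf.contDiffAt (hV.mem_nhds hxV)).isSymmSndFDerivAt (by
        simp only [minSmoothness_of_isRCLikeNormedField]; exact WithTop.coe_le_coe.2 (le_top : (2 : ℕ∞) ≤ ⊤))
    have e : ∀ a b : Fin n, pd (fun y => Ψ y a) b x
        = fderiv ℝ (fderiv ℝ f) x (Pi.single b 1) (Pi.single a 1) := by
      intro a b
      have : (fun y => Ψ y a) =ᶠ[nhds x] fun y => fderiv ℝ f y (Pi.single a 1) := by
        filter_upwards [hV.mem_nhds hxV] with y hy
        exact H y hy a
      unfold pd
      rw [this.fderiv_eq, fderiv_clm_apply hd (differentiableAt_const _)]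
      simp
    rw [e, e]
    exact hs _ _
end

section
/- Let U ⊆ ℝⁿ be open, let Γ be smooth Christoffel symbols on U, let h be a smooth metric on U, and let μ : U → ℝ be a smooth positive function. Suppose ∇h = h ⊗ Ψ on U where Ψ is the 1-form with components Ψₖ = ∂ₖ(log μ) (equivalently Ψₖ = (∂ₖμ)/μ). Then the field μ⁻¹h is parallel: ∂ₖ(μ⁻¹h)ᵢⱼ − Σₗ Γˡₖᵢ (μ⁻¹h)ₗⱼ − Σₗ Γˡₖⱼ (μ⁻¹h)ᵢₗ = 0 on U for all i,j,k. -/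
/-- **Proposition 2 / 3(a)**: if `∇h = h ⊗ Ψ` with `Ψₖ = ∂ₖ(log μ) = (∂ₖμ)/μ` for a smooth
positive function `μ`, then `μ⁻¹ h` is parallel. -/
theorem locallyMetric_of_exact_logDeriv {n : ℕ} (U : Set (Fin n → ℝ)) (hU : IsOpen U)
    (Γ : (Fin n → ℝ) → Fin n → Fin n → Fin n → ℝ) (hΓ : SmoothChristoffelOn Γ U)
    (h : (Fin n → ℝ) → Matrix (Fin n) (Fin n) ℝ) (hh : SmoothMetricOn h U)
    (μ : (Fin n → ℝ) → ℝ) (hμ : ContDiffOn ℝ (⊤ : ℕ∞) μ U) (hμpos : ∀ x ∈ U, 0 < μ x)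
    (hconf : ∀ x ∈ U, ∀ i j k, covDeriv Γ h k i j x = h x i j * (pd μ k x / μ x)) :
    ∀ x ∈ U, ∀ i j k, covDeriv Γ (fun y => (μ y)⁻¹ • h y) k i j x = 0 := by
  intro x hx i j k
  have hne : μ x ≠ 0 := (hμpos x hx).ne'
  have hn : U ∈ nhds x := hU.mem_nhds hx
  have dμ : HasFDerivAt μ (fderiv ℝ μ x) x :=
    ((hμ.contDiffAt hn).differentiableAt (by simp)).hasFDerivAt
  have dh : HasFDerivAt (fun y => h y i j) (fderiv ℝ (fun y => h y i j) x) x :=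
    (((hh.1 i j).contDiffAt hn).differentiableAt (by simp)).hasFDerivAt
  have dinv : HasFDerivAt (fun y => (μ y)⁻¹) ((-(μ x ^ 2)⁻¹) • fderiv ℝ μ x) x :=
    (hasDerivAt_inv hne).comp_hasFDerivAt x dμ
  have key : pd (fun y => ((μ y)⁻¹ • h y) i j) k x
      = (μ x)⁻¹ * pd (fun y => h y i j) k x + h x i j * (-(μ x ^ 2)⁻¹ * pd μ k x) := by
    have e : (fun y => ((μ y)⁻¹ • h y) i j) = fun y => (μ y)⁻¹ * h y i j := by
      funext y
      simp [Matrix.smul_apply]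
    unfold pd
    rw [e, (dinv.fun_mul dh).fderiv]
    simp
  have hc := hconf x hx i j k
  unfold covDeriv at hc ⊢
  rw [key]
  have s1 : ∑ l, Γ x l k i * ((μ x)⁻¹ • h x) l j = (μ x)⁻¹ * ∑ l, Γ x l k i * h x l j := by
    rw [Finset.mul_sum]
    refine Finset.sum_congr rfl fun l _ => ?_
    rw [Matrix.smul_apply, smul_eq_mul]
    ring
  have s2 : ∑ l, Γ x l k j * ((μ x)⁻¹ • h x) i l = (μ x)⁻¹ * ∑ l, Γ x l k j * h x i l := by
    rw [Finset.mul_sum]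
    refine Finset.sum_congr rfl fun l _ => ?_
    rw [Matrix.smul_apply, smul_eq_mul]
    ring
  rw [s1, s2]
  have e2 : (μ x ^ 2)⁻¹ = (μ x)⁻¹ * (μ x)⁻¹ := by rw [sq, mul_inv]
  rw [div_eq_mul_inv] at hc
  rw [e2]
  linear_combination (μ x)⁻¹ * hc
end

section
/- Let U ⊆ ℝⁿ be open, let Γ be smooth Christoffel symbols on U, let h be a smooth metric on U, and let Ψ be a smooth closed 1-form on U with ∇h = h ⊗ Ψ. Then the connection given by Γ is locally metric: for every x ∈ U there exists an open neighbourhood V ⊆ U of x and a smooth positive function μ : V → ℝ such that μ⁻¹h is parallel on V, i.e. ∂ₖ(μ⁻¹h)ᵢⱼ − Σₗ Γˡₖᵢ (μ⁻¹h)ₗⱼ − Σₗ Γˡₖⱼ (μ⁻¹h)ᵢₗ = 0 on V for all i,j,k. -/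
/-- The 1-form `Ψ` as a continuous-linear-map-valued function. -/
noncomputable def oneFormCLM {n : ℕ} (Ψ : (Fin n → ℝ) → Fin n → ℝ) (y : Fin n → ℝ) :
    (Fin n → ℝ) →L[ℝ] ℝ :=
  ∑ k, Ψ y k • (ContinuousLinearMap.proj k : (Fin n → ℝ) →L[ℝ] ℝ)

theorem clm_apply_eq_sum_aux {n : ℕ} (L : (Fin n → ℝ) →L[ℝ] ℝ) (v : Fin n → ℝ) :
    L v = ∑ i, v i * L (Pi.single i 1) := by
  conv_lhs => rw [pi_eq_sum_univ' v]
  simp [map_sum]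

theorem exists_primitive_aux {n : ℕ} (V : Set (Fin n → ℝ)) (hV : IsOpen V) (hc : Convex ℝ V)
    (Ψ : (Fin n → ℝ) → Fin n → ℝ)
    (hΨ : ∀ k, ContDiffOn ℝ (⊤ : ℕ∞) (fun x => Ψ x k) V)
    (hcl : ∀ x ∈ V, ∀ i j, pd (fun y => Ψ y j) i x = pd (fun y => Ψ y i) j x) :
    ∃ f : (Fin n → ℝ) → ℝ, ∀ y ∈ V, HasFDerivAt f (oneFormCLM Ψ y) y := by
  have hd : ∀ a ∈ V, HasFDerivAt (oneFormCLM Ψ)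
      (∑ k, (fderiv ℝ (fun y => Ψ y k) a).smulRight
        (ContinuousLinearMap.proj k : (Fin n → ℝ) →L[ℝ] ℝ)) a := by
    intro a ha
    unfold oneFormCLM
    refine HasFDerivAt.fun_sum fun k _ => ?_
    have hk : HasFDerivAt (fun y => Ψ y k) (fderiv ℝ (fun y => Ψ y k) a) a :=
      (((hΨ k).contDiffAt (hV.mem_nhds ha)).differentiableAt (by simp)).hasFDerivAt
    exact hk.smul_const (ContinuousLinearMap.proj k : (Fin n → ℝ) →L[ℝ] ℝ)
  refine hc.exists_forall_hasFDerivAt_of_fderiv_symmetric hV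
    (fun a ha => (hd a ha).differentiableAt.differentiableWithinAt) ?_
  intro a ha v w
  rw [(hd a ha).fderiv]
  simp only [ContinuousLinearMap.sum_apply, ContinuousLinearMap.smulRight_apply,
    ContinuousLinearMap.smul_apply, ContinuousLinearMap.proj_apply, smul_eq_mul]
  simp only [clm_apply_eq_sum_aux _ v, clm_apply_eq_sum_aux _ w, Finset.sum_mul]
  rw [Finset.sum_comm]
  refine Finset.sum_congr rfl fun i _ => Finset.sum_congr rfl fun j _ => ?_
  have := hcl a ha i j
  simp only [pd] at this
  rw [this]; ring

/-- **Proposition 2**: if `∇h = h ⊗ Ψ` for a smooth closed 1-form `Ψ`, then the connection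
given by `Γ` is locally metric: around each point of `U` there is a smooth positive
function `μ` such that `μ⁻¹ h` is parallel. -/
theorem locallyMetric_of_closed_oneForm {n : ℕ} (U : Set (Fin n → ℝ)) (hU : IsOpen U)
    (Γ : (Fin n → ℝ) → Fin n → Fin n → Fin n → ℝ) (hΓ : SmoothChristoffelOn Γ U)
    (h : (Fin n → ℝ) → Matrix (Fin n) (Fin n) ℝ) (hh : SmoothMetricOn h U)
    (Ψ : (Fin n → ℝ) → Fin n → ℝ)
    (hΨsmooth : ∀ k, ContDiffOn ℝ (⊤ : ℕ∞) (fun x => Ψ x k) U)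
    (hΨclosed : ∀ x ∈ U, ∀ i j, pd (fun y => Ψ y j) i x = pd (fun y => Ψ y i) j x)
    (heq : ∀ x ∈ U, ∀ i j k, covDeriv Γ h k i j x = h x i j * Ψ x k) :
    ∀ x ∈ U, ∃ V : Set (Fin n → ℝ), IsOpen V ∧ x ∈ V ∧ V ⊆ U ∧
      ∃ μ : (Fin n → ℝ) → ℝ, ContDiffOn ℝ (⊤ : ℕ∞) μ V ∧ (∀ y ∈ V, 0 < μ y) ∧
        ∀ y ∈ V, ∀ i j k, covDeriv Γ (fun z => (μ z)⁻¹ • h z) k i j y = 0 := by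
  intro x hx
  obtain ⟨r, hr, hball⟩ := Metric.isOpen_iff.1 hU x hx
  set V := Metric.ball x r with hV
  have hVo : IsOpen V := Metric.isOpen_ball
  obtain ⟨f, hf⟩ := exists_primitive_aux V hVo (convex_ball x r) Ψ
    (fun k => (hΨsmooth k).mono hball) (fun y hy => hΨclosed y (hball hy))
  have hfs : ContDiffOn ℝ (⊤ : ℕ∞) f V := by
    refine (contDiffOn_infty_iff_fderiv_of_isOpen hVo).2
      ⟨fun y hy => (hf y hy).differentiableAt.differentiableWithinAt, ?_⟩
    refine ContDiffOn.congr (f := oneFormCLM Ψ) ?_ (fun y hy => (hf y hy).fderiv)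
    unfold oneFormCLM
    exact ContDiffOn.sum fun k _ => ((hΨsmooth k).mono hball).smul contDiffOn_const
  refine ⟨V, hVo, Metric.mem_ball_self hr, hball, fun y => Real.exp (f y), hfs.exp,
    fun y _ => Real.exp_pos _, ?_⟩
  intro y hy i j k
  have hyU := hball hy
  have h1 : HasFDerivAt (fun z => h z i j) (fderiv ℝ (fun z => h z i j) y) y :=
    (((hh.1 i j).contDiffAt (hU.mem_nhds hyU)).differentiableAt (by simp)).hasFDerivAt
  have h2 : HasFDerivAt (fun z => (Real.exp (f z))⁻¹)
      (Real.exp (-f y) • (-oneFormCLM Ψ y)) y := by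
    simp only [← Real.exp_neg]
    exact (hf y hy).neg.exp
  have h3 := (h2.mul h1).fderiv
  have h4 := heq y hyU i j k
  have h5 : oneFormCLM Ψ y (Pi.single k 1) = Ψ y k := by
    simp [oneFormCLM, Pi.single_apply]
  simp only [covDeriv, pd, Matrix.smul_apply, smul_eq_mul] at h4 ⊢
  have h3' : fderiv ℝ (fun z => (Real.exp (f z))⁻¹ * h z i j) y = _ := h3
  rw [h3']
  have e1 : ∀ l, Γ y l k i * ((Real.exp (f y))⁻¹ * h y l j) =
    (Real.exp (f y))⁻¹ * (Γ y l k i * h y l j) := fun l => by ring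
  have e2 : ∀ l, Γ y l k j * ((Real.exp (f y))⁻¹ * h y i l) =
    (Real.exp (f y))⁻¹ * (Γ y l k j * h y i l) := fun l => by ring
  simp only [e1, e2, ← Finset.mul_sum, ContinuousLinearMap.add_apply,
    ContinuousLinearMap.smul_apply, ContinuousLinearMap.neg_apply, smul_eq_mul, h5, Real.exp_neg]
  linear_combination (Real.exp (f y))⁻¹ * h4
end

section
/- Let U ⊆ ℝⁿ be open and connected, let Γ be smooth Christoffel symbols on U, let h be a smooth metric on U, and let Ψ be a smooth closed 1-form on U with ∇h = h ⊗ Ψ. Then there exists a smooth positive function μ : U → ℝ such that μ⁻¹h is parallel on all of U (i.e. the connection is globally metric with a parallel metric conformal to h) if and only if Ψ is exact, i.e. there exists a smooth function f : U → ℝ with Ψₖ = ∂ₖf on U for all k. -/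
theorem covDeriv_conf {n : ℕ} (Γ : (Fin n → ℝ) → Fin n → Fin n → Fin n → ℝ)
    (h : (Fin n → ℝ) → Matrix (Fin n) (Fin n) ℝ) (μ : (Fin n → ℝ) → ℝ)
    (x : Fin n → ℝ) (i j k : Fin n) (p : ℝ)
    (hd : DifferentiableAt ℝ (fun y => h y i j) x)
    (hμ : DifferentiableAt ℝ μ x) (h0 : μ x ≠ 0)
    (heq : covDeriv Γ h k i j x = h x i j * p) :
    covDeriv Γ (fun z => (μ z)⁻¹ • h z) k i j x
      = (μ x)⁻¹ * h x i j * (p - (μ x)⁻¹ * pd μ k x) := by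
  have e : pd (fun y => ((μ y)⁻¹ • h y) i j) k x
      = (μ x)⁻¹ * pd (fun y => h y i j) k x - ((μ x)⁻¹)^2 * pd μ k x * h x i j := by
    have hinv : HasFDerivAt (fun y => (μ y)⁻¹) ((-(μ x ^ 2)⁻¹) • fderiv ℝ μ x) x :=
      (hasDerivAt_inv h0).comp_hasFDerivAt x hμ.hasFDerivAt
    have H := (hinv.mul hd.hasFDerivAt).fderiv
    have H2 : pd (fun y => ((μ y)⁻¹ • h y) i j) k x
        = fderiv ℝ ((fun y => (μ y)⁻¹) * (fun y => h y i j)) x (Pi.single k 1) := rfl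
    rw [H2, H]
    simp only [pd, add_apply, ContinuousLinearMap.add_apply,
      ContinuousLinearMap.smul_apply, smul_eq_mul]
    ring
  have s1 : ∑ l, Γ x l k i * ((μ x)⁻¹ • h x) l j = (μ x)⁻¹ * ∑ l, Γ x l k i * h x l j := by
    rw [Finset.mul_sum]
    refine Finset.sum_congr rfl fun l _ => ?_
    simp only [Matrix.smul_apply, smul_eq_mul]; ring
  have s2 : ∑ l, Γ x l k j * ((μ x)⁻¹ • h x) i l = (μ x)⁻¹ * ∑ l, Γ x l k j * h x i l := by
    rw [Finset.mul_sum]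
    refine Finset.sum_congr rfl fun l _ => ?_
    simp only [Matrix.smul_apply, smul_eq_mul]; ring
  unfold covDeriv at heq ⊢
  rw [e]
  simp only [s1, s2]
  linear_combination (μ x)⁻¹ * heq

/-- **Proposition 3 and its Corollary**: for a smooth closed 1-form `Ψ` with `∇h = h ⊗ Ψ`
on an open connected set `U`, the connection is globally metric with a parallel metric
conformal to `h` if and only if `Ψ` is exact. -/
theorem globallyMetric_iff_exact {n : ℕ} (U : Set (Fin n → ℝ)) (hU : IsOpen U)
    (hUconn : IsConnected U)
    (Γ : (Fin n → ℝ) → Fin n → Fin n → Fin n → ℝ) (hΓ : SmoothChristoffelOn Γ U)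
    (h : (Fin n → ℝ) → Matrix (Fin n) (Fin n) ℝ) (hh : SmoothMetricOn h U)
    (Ψ : (Fin n → ℝ) → Fin n → ℝ)
    (hΨsmooth : ∀ k, ContDiffOn ℝ (⊤ : ℕ∞) (fun x => Ψ x k) U)
    (hΨclosed : ∀ x ∈ U, ∀ i j, pd (fun y => Ψ y j) i x = pd (fun y => Ψ y i) j x)
    (heq : ∀ x ∈ U, ∀ i j k, covDeriv Γ h k i j x = h x i j * Ψ x k) :
    (∃ μ : (Fin n → ℝ) → ℝ, ContDiffOn ℝ (⊤ : ℕ∞) μ U ∧ (∀ x ∈ U, 0 < μ x) ∧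
        ∀ x ∈ U, ∀ i j k, covDeriv Γ (fun z => (μ z)⁻¹ • h z) k i j x = 0) ↔
    (∃ f : (Fin n → ℝ) → ℝ, ContDiffOn ℝ (⊤ : ℕ∞) f U ∧
        ∀ x ∈ U, ∀ k, Ψ x k = pd f k x) := by
  have dh : ∀ x ∈ U, ∀ i j, DifferentiableAt ℝ (fun y => h y i j) x := fun x hx i j =>
    ((hh.1 i j).contDiffAt (hU.mem_nhds hx)).differentiableAt (by simp)
  constructor
  · rintro ⟨μ, hμ, hpos, hpar⟩
    refine ⟨fun x => Real.log (μ x), hμ.log fun x hx => (hpos x hx).ne', fun x hx k => ?_⟩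
    have dμ : DifferentiableAt ℝ μ x :=
      (hμ.contDiffAt (hU.mem_nhds hx)).differentiableAt (by simp)
    have h0 := (hpos x hx).ne'
    obtain ⟨i, j, hij⟩ : ∃ i j, h x i j ≠ 0 := by
      by_contra! hc
      have hz : h x = 0 := by ext i j; exact hc i j
      have hu := (hh.2 x hx).2
      have : Nonempty (Fin n) := ⟨k⟩
      rw [hz] at hu
      exact not_isUnit_zero hu
    have H := covDeriv_conf Γ h μ x i j k (Ψ x k) (dh x hx i j) dμ h0 (heq x hx i j k)
    rw [hpar x hx i j k] at H
    have H1 : Ψ x k - (μ x)⁻¹ * pd μ k x = 0 := by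
      rcases mul_eq_zero.1 H.symm with H | H
      · exact absurd H (mul_ne_zero (inv_ne_zero h0) hij)
      · exact H
    have H2 : pd (fun x => Real.log (μ x)) k x = (μ x)⁻¹ * pd μ k x := by
      unfold pd
      rw [(dμ.hasFDerivAt.log h0).fderiv]
      simp
    rw [H2]; linarith
  · rintro ⟨f, hf, hΨ⟩
    refine ⟨fun x => Real.exp (f x), hf.exp, fun x _ => Real.exp_pos _, fun x hx i j k => ?_⟩
    have df : DifferentiableAt ℝ f x :=
      (hf.contDiffAt (hU.mem_nhds hx)).differentiableAt (by simp)
    rw [covDeriv_conf Γ h (fun x => Real.exp (f x)) x i j k (Ψ x k) (dh x hx i j) df.exp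
      (Real.exp_ne_zero _) (heq x hx i j k)]
    have H2 : pd (fun x => Real.exp (f x)) k x = Real.exp (f x) * pd f k x := by
      unfold pd
      rw [df.hasFDerivAt.exp.fderiv]
      simp
    rw [H2, hΨ x hx k, inv_mul_cancel_left₀ (Real.exp_ne_zero _)]
    simp
end

section
/- Let U ⊆ ℝⁿ be open, let h be a smooth metric on U, and let Ψ be a smooth 1-form on U. Then there exists a unique family of smooth Christoffel symbols Γ on U that is symmetric in its lower indices (Γˡᵢⱼ = Γˡⱼᵢ for all i,j,l) and satisfies ∇h = h ⊗ Ψ on U, i.e. ∂ₖhᵢⱼ − Σₗ Γˡₖᵢ hₗⱼ − Σₗ Γˡₖⱼ hᵢₗ = hᵢⱼ Ψₖ for all i,j,k. -/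
open scoped Matrix

theorem aux_det_smooth {n : ℕ} {U : Set (Fin n → ℝ)} (M : (Fin n → ℝ) → Matrix (Fin n) (Fin n) ℝ)
    (hM : ∀ i j, ContDiffOn ℝ (⊤ : ℕ∞) (fun x => M x i j) U) :
    ContDiffOn ℝ (⊤ : ℕ∞) (fun x => (M x).det) U := by
  simp only [Matrix.det_apply']
  exact ContDiffOn.sum fun σ _ => contDiffOn_const.mul (contDiffOn_prod fun i _ => hM _ _)

theorem aux_inv_smooth {n : ℕ} {U : Set (Fin n → ℝ)} (M : (Fin n → ℝ) → Matrix (Fin n) (Fin n) ℝ)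
    (hM : ∀ i j, ContDiffOn ℝ (⊤ : ℕ∞) (fun x => M x i j) U)
    (hu : ∀ x ∈ U, IsUnit (M x)) (i j : Fin n) :
    ContDiffOn ℝ (⊤ : ℕ∞) (fun x => (M x)⁻¹ i j) U := by
  simp only [Matrix.inv_def, Matrix.smul_apply, smul_eq_mul, Ring.inverse_eq_inv',
    Matrix.adjugate_apply]
  refine ContDiffOn.mul (ContDiffOn.inv (aux_det_smooth M hM) fun x hx => ?_) ?_
  · exact ((Matrix.isUnit_iff_isUnit_det _).1 (hu x hx)).ne_zero
  · refine aux_det_smooth _ fun a b => ?_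
    by_cases hab : a = j
    · subst hab
      simp only [Matrix.updateRow_self]
      exact contDiffOn_const
    · simp only [Matrix.updateRow_ne hab]
      exact hM a b

theorem aux_pd_smooth {n : ℕ} {U : Set (Fin n → ℝ)} (hU : IsOpen U) (f : (Fin n → ℝ) → ℝ)
    (hf : ContDiffOn ℝ (⊤ : ℕ∞) f U) (k : Fin n) :
    ContDiffOn ℝ (⊤ : ℕ∞) (fun x => pd f k x) U := by
  unfold pd
  exact (hf.fderiv_of_isOpen hU (by simp)).clm_apply contDiffOn_const

theorem aux_pd_symm {n : ℕ} {U : Set (Fin n → ℝ)} (hU : IsOpen U)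
    (h : (Fin n → ℝ) → Matrix (Fin n) (Fin n) ℝ) (hs : ∀ x ∈ U, (h x).IsSymm)
    (x : Fin n → ℝ) (hx : x ∈ U) (i j k : Fin n) :
    pd (fun y => h y i j) k x = pd (fun y => h y j i) k x := by
  unfold pd
  have : (fun y => h y i j) =ᶠ[nhds x] (fun y => h y j i) := by
    filter_upwards [hU.mem_nhds hx] with y hy
    exact (hs y hy).apply j i
  rw [this.fderiv_eq]

/-- **Proposition 4**: a pair `(h, Ψ)` of a smooth metric and a smooth 1-form on an open
set `U` determines a unique symmetric connection `Γ` by the equation `∇h = h ⊗ Ψ`. -/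
theorem existsUnique_symmetric_connection {n : ℕ} (U : Set (Fin n → ℝ)) (hU : IsOpen U)
    (h : (Fin n → ℝ) → Matrix (Fin n) (Fin n) ℝ) (hh : SmoothMetricOn h U)
    (Ψ : (Fin n → ℝ) → Fin n → ℝ)
    (hΨsmooth : ∀ k, ContDiffOn ℝ (⊤ : ℕ∞) (fun x => Ψ x k) U) :
    ∃ Γ : (Fin n → ℝ) → Fin n → Fin n → Fin n → ℝ,
      (SmoothChristoffelOn Γ U ∧
        (∀ x ∈ U, ∀ i j l, Γ x l i j = Γ x l j i) ∧
        (∀ x ∈ U, ∀ i j k, covDeriv Γ h k i j x = h x i j * Ψ x k)) ∧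
      ∀ Γ' : (Fin n → ℝ) → Fin n → Fin n → Fin n → ℝ,
        (SmoothChristoffelOn Γ' U ∧
          (∀ x ∈ U, ∀ i j l, Γ' x l i j = Γ' x l j i) ∧
          (∀ x ∈ U, ∀ i j k, covDeriv Γ' h k i j x = h x i j * Ψ x k)) →
        ∀ x ∈ U, ∀ l i j, Γ' x l i j = Γ x l i j := by
  obtain ⟨hsm, hsu⟩ := hh
  have hs : ∀ x ∈ U, ∀ i j, h x i j = h x j i := fun x hx i j => (hsu x hx).1.apply j i
  have hdet : ∀ x ∈ U, IsUnit (h x).det := fun x hx =>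
    (Matrix.isUnit_iff_isUnit_det _).1 (hsu x hx).2
  let A : (Fin n → ℝ) → Fin n → Fin n → Fin n → ℝ := fun x k i j =>
    pd (fun y => h y i j) k x - h x i j * Ψ x k
  have hAsm : ∀ k i j, ContDiffOn ℝ (⊤ : ℕ∞) (fun x => A x k i j) U := fun k i j =>
    (aux_pd_smooth hU _ (hsm i j) k).sub ((hsm i j).mul (hΨsmooth k))
  have hA : ∀ x ∈ U, ∀ k i j, A x k i j = A x k j i := fun x hx k i j => by
    simp only [A]
    rw [aux_pd_symm hU h (fun x hx => (hsu x hx).1) x hx i j k, hs x hx i j]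
  let G : (Fin n → ℝ) → Fin n → Fin n → Fin n → ℝ := fun x k i j =>
    (1 / 2) * (A x k i j + A x i k j - A x j k i)
  let Γ : (Fin n → ℝ) → Fin n → Fin n → Fin n → ℝ := fun x l k i =>
    ((fun j => G x k i j) ᵥ* (h x)⁻¹) l
  have hΓ : ∀ x ∈ U, ∀ k i j, ∑ l, Γ x l k i * h x l j = G x k i j := fun x hx k i j => by
    have h1 : (((fun j => G x k i j) ᵥ* (h x)⁻¹) ᵥ* h x) = fun j => G x k i j := by
      rw [Matrix.vecMul_vecMul, Matrix.nonsing_inv_mul _ (hdet x hx), Matrix.vecMul_one]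
    exact congrFun h1 j
  have hcov : ∀ (Γ : (Fin n → ℝ) → Fin n → Fin n → Fin n → ℝ), ∀ x ∈ U, ∀ i j k,
      (covDeriv Γ h k i j x = h x i j * Ψ x k ↔
        A x k i j = (∑ l, Γ x l k i * h x l j) + ∑ l, Γ x l k j * h x l i) := by
    intro Γ x hx i j k
    have : ∑ l, Γ x l k j * h x i l = ∑ l, Γ x l k j * h x l i :=
      Finset.sum_congr rfl fun l _ => by rw [hs x hx i l]
    simp only [covDeriv, A, this]
    constructor <;> intro h <;> linarith
  refine ⟨Γ, ⟨?_, ?_, ?_⟩, ?_⟩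
  · intro l k i
    simp only [Γ, Matrix.vecMul, dotProduct]
    refine ContDiffOn.sum fun j _ => ContDiffOn.mul ?_
      (aux_inv_smooth h hsm (fun x hx => (hsu x hx).2) j l)
    exact contDiffOn_const.mul (((hAsm _ _ _).add (hAsm _ _ _)).sub (hAsm _ _ _))
  · intro x hx i j l
    have : (fun m => G x i j m) = fun m => G x j i m := by
      funext m
      simp only [G]
      rw [hA x hx m i j]
      ring
    simp only [Γ]
    rw [this]
  · intro x hx i j k
    rw [hcov Γ x hx, hΓ x hx, hΓ x hx]
    simp only [G]
    rw [hA x hx k j i, hA x hx i k j, hA x hx j k i]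
    ring
  · rintro Γ' ⟨-, hsym, hc⟩ x hx l i j
    have key : ((fun l => Γ' x l i j) ᵥ* h x) = fun m => G x i j m := by
      funext m
      change ∑ l, Γ' x l i j * h x l m = G x i j m
      have sy : ∀ a b c, ∑ l, Γ' x l a b * h x l c = ∑ l, Γ' x l b a * h x l c :=
        fun a b c => Finset.sum_congr rfl fun l _ => by rw [hsym x hx a b l]
      have e1 := (hcov Γ' x hx j m i).1 (hc x hx j m i)
      have e2 := (hcov Γ' x hx i m j).1 (hc x hx i m j)
      have e3 := (hcov Γ' x hx i j m).1 (hc x hx i j m)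
      simp only [G]
      rw [e1, e2, e3, sy j i m, sy j m i, sy i m j]
      ring
    have : (fun l => Γ' x l i j) = (fun m => G x i j m) ᵥ* (h x)⁻¹ := by
      rw [← key, Matrix.vecMul_vecMul, Matrix.mul_nonsing_inv _ (hdet x hx), Matrix.vecMul_one]
    exact congrFun this l
end

section
/- Let U ⊆ ℝⁿ be open, let Γ be smooth Christoffel symbols on U, and suppose the same Γ satisfies both ∇h₁ = h₁ ⊗ Ψ₁ and ∇h₂ = h₂ ⊗ Ψ₂ on U, where h₁, h₂ are smooth metrics on U, Ψ₁, Ψ₂ are smooth 1-forms on U, and h₂ = α·h₁ for a smooth nowhere-vanishing function α : U → ℝ. Then Ψ₂ = Ψ₁ + d log|α|, i.e. (Ψ₂)ₖ = (Ψ₁)ₖ + (∂ₖα)/α on U for all k. -/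
/-- If the same `Γ` satisfies `∇h₁ = h₁ ⊗ Ψ₁` and `∇h₂ = h₂ ⊗ Ψ₂` with `h₂ = α·h₁` for a
smooth nowhere-vanishing `α`, then `Ψ₂ = Ψ₁ + d log|α|`. -/
theorem oneForm_rescaling {n : ℕ} (U : Set (Fin n → ℝ)) (hU : IsOpen U)
    (Γ : (Fin n → ℝ) → Fin n → Fin n → Fin n → ℝ) (hΓ : SmoothChristoffelOn Γ U)
    (h₁ h₂ : (Fin n → ℝ) → Matrix (Fin n) (Fin n) ℝ)
    (hh₁ : SmoothMetricOn h₁ U) (hh₂ : SmoothMetricOn h₂ U)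
    (Ψ₁ Ψ₂ : (Fin n → ℝ) → Fin n → ℝ)
    (hΨ₁smooth : ∀ k, ContDiffOn ℝ (⊤ : ℕ∞) (fun x => Ψ₁ x k) U)
    (hΨ₂smooth : ∀ k, ContDiffOn ℝ (⊤ : ℕ∞) (fun x => Ψ₂ x k) U)
    (α : (Fin n → ℝ) → ℝ) (hα : ContDiffOn ℝ (⊤ : ℕ∞) α U) (hα0 : ∀ x ∈ U, α x ≠ 0)
    (hαh : ∀ x ∈ U, h₂ x = α x • h₁ x)
    (heq₁ : ∀ x ∈ U, ∀ i j k, covDeriv Γ h₁ k i j x = h₁ x i j * Ψ₁ x k)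
    (heq₂ : ∀ x ∈ U, ∀ i j k, covDeriv Γ h₂ k i j x = h₂ x i j * Ψ₂ x k) :
    ∀ x ∈ U, ∀ k, Ψ₂ x k = Ψ₁ x k + pd α k x / α x := by
  intro x hx k
  have hn : ∃ i j, h₁ x i j ≠ 0 := by
    by_contra hcon
    push Not at hcon
    have h0 : h₁ x = 0 := by
      ext i j
      exact hcon i j
    have hu := (hh₁.2 x hx).2
    rw [h0, isUnit_zero_iff] at hu
    have := congrFun (congrFun hu k) k
    simp at this
  obtain ⟨i, j, hij⟩ := hn
  have hxU : U ∈ nhds x := hU.mem_nhds hx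
  have hdα : DifferentiableAt ℝ α x := (hα.contDiffAt hxU).differentiableAt (by simp)
  have hdh : DifferentiableAt ℝ (fun y => h₁ y i j) x :=
    ((hh₁.1 i j).contDiffAt hxU).differentiableAt (by simp)
  have hev : (fun y => h₂ y i j) =ᶠ[nhds x] (fun y => α y * h₁ y i j) := by
    filter_upwards [hxU] with y hy
    simp [hαh y hy]
  have hpd : pd (fun y => h₂ y i j) k x
      = α x * pd (fun y => h₁ y i j) k x + h₁ x i j * pd α k x := by
    unfold pd
    rw [hev.fderiv_eq, fderiv_fun_mul hdα hdh]
    simp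
  have e1 := heq₁ x hx i j k
  have e2 := heq₂ x hx i j k
  unfold covDeriv at e1 e2
  rw [hpd, hαh x hx] at e2
  simp only [Matrix.smul_apply, smul_eq_mul, mul_left_comm _ (α x), ← Finset.mul_sum] at e2
  have ha := hα0 x hx
  have key : h₁ x i j * (α x * Ψ₂ x k) = h₁ x i j * (α x * Ψ₁ x k + pd α k x) := by
    linear_combination α x * e1 - e2
  have key2 := mul_left_cancel₀ hij key
  field_simp
  linear_combination key2
end
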